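/- Let F be a field of characteristic 2. Suppose that for every α ∈ F and all γ, δ ∈ F^×, the 5-dimensional quadratic form ⟨1⟩ ⊥ γ[1,α] ⊥ δ[1,α], i.e. the form (x, y₁, y₂, z₁, z₂) ↦ x² + γ(y₁² + y₁y₂ + αy₂²) + δ(z₁² + z₁z₂ + αz₂²), is isotropic. Then every quadratic 3-fold Pfister form over F is hyperbolic, i.e. I_q³F = 0. -/

import Mathlib

/-!
The hypothesis form `⟨1⟩ ⊥ c₂[1,b] ⊥ c₁[1,b]` is a subform of the Pfister form
`⟨⟨c₁,c₂,b]] = [1,b] ⊥ c₂[1,b] ⊥ c₁[1,b] ⊥ c₁c₂[1,b]`, because `[1,b]` represents `1`.  Hence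
every 3-fold Pfister form is isotropic, and it remains to prove that an isotropic Pfister form is
hyperbolic.

The inductive step (`prod_smul_equiv_of_isotropic`) concerns a form `Q` that is *round*, meaning
`Q w • Q ≅ Q` whenever `Q w ≠ 0`.  If `Q ⊥ c Q` is isotropic, then either `Q` is already isotropic,
hence hyperbolic by induction, or `c` is a quotient of two nonzero values of `Q` (up to a sign,
which is immaterial in characteristic 2), so that `c Q ≅ Q` and `Q ⊥ c Q ≅ Q ⊥ Q`, which is
hyperbolic in characteristic 2.

Roundness of `[1,b]` (`twoDimForm_round`) and of `⟨⟨c,b]]` (`pfister2_round`) holds because these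
are the norm forms of the quadratic algebra `F[ω]/(ω² - ω + b)` and of the quaternion algebra
obtained from it by Cayley–Dickson doubling: left multiplication by an element of norm `n ≠ 0` is a
similitude with factor `n`, with inverse `n⁻¹` times left multiplication by the conjugate.
-/

/-!
STATEMENT 11 (Remark after Theorem `pure`, case p = 2):
Let `F` be a field of characteristic 2.  Suppose that for every `α ∈ F` and all
`γ, δ ∈ F^×`, the 5-dimensional quadratic form `⟨1⟩ ⊥ γ[1,α] ⊥ δ[1,α]`, i.e.
`(x, y₁, y₂, z₁, z₂) ↦ x² + γ(y₁² + y₁y₂ + αy₂²) + δ(z₁² + z₁z₂ + αz₂²)`,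
is isotropic.  Then every quadratic 3-fold Pfister form over `F` is hyperbolic
(isometric to an orthogonal sum of 4 hyperbolic planes `ℍ = [0,0]`), i.e. `I_q³F = 0`.

Here `[u,v]` denotes the two-dimensional quadratic form `(s,t) ↦ us² + st + vt²`,
`⟨1⟩` is the one-dimensional form `x ↦ x²`, and the quadratic 3-fold Pfister form
`⟨⟨c₁, c₂, v]] = ⟨1,c₁⟩⊗⟨1,c₂⟩⊗[1,v]` (with `c₁, c₂ ∈ F^×`) is built up by
`⟨1,c⟩ ⊗ φ = φ ⊥ c·φ` starting from `[1,v]`.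
-/

noncomputable section

open QuadraticMap

/-- The two-dimensional quadratic form `[a,b] : (x,y) ↦ ax² + xy + by²`. -/
def twoDimForm (F : Type*) [Field F] (a b : F) : QuadraticForm F (Fin 2 → F) :=
  a • proj 0 0 + proj 0 1 + b • proj 1 1

/-- The 5-dimensional quadratic form `⟨1⟩ ⊥ γ[1,α] ⊥ δ[1,α]`. -/
def pureAlbert2 (F : Type*) [Field F] (α γ δ : F) :
    QuadraticForm F (F × ((Fin 2 → F) × (Fin 2 → F))) :=
  (QuadraticMap.sq (R := F)).prod ((γ • twoDimForm F 1 α).prod (δ • twoDimForm F 1 α))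

/-- The quadratic 2-fold Pfister form `⟨⟨c, b]] = ⟨1,c⟩ ⊗ [1,b] = [1,b] ⊥ c·[1,b]`. -/
def pfister2 (F : Type*) [Field F] (c b : F) :
    QuadraticForm F ((Fin 2 → F) × (Fin 2 → F)) :=
  (twoDimForm F 1 b).prod (c • twoDimForm F 1 b)

/-- The quadratic 3-fold Pfister form `⟨⟨c₂, c₁, b]] = ⟨⟨c₁,b]] ⊥ c₂·⟨⟨c₁,b]]`. -/
def pfister3 (F : Type*) [Field F] (c₂ c₁ b : F) :=
  (pfister2 F c₁ b).prod (c₂ • pfister2 F c₁ b)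

/-- The hyperbolic plane `ℍ = [0,0]`. -/
def hypPlane (F : Type*) [Field F] := twoDimForm F 0 0

/-- The orthogonal sum of 4 hyperbolic planes `ℍ = [0,0]`, on the same underlying
space as a quadratic 3-fold Pfister form. -/
def hyperbolic8 (F : Type*) [Field F] :=
  ((hypPlane F).prod (hypPlane F)).prod ((hypPlane F).prod (hypPlane F))

/-! ### Isotropic Pfister forms over a round form -/

section Scaling

variable {F V : Type*} [Field F] [AddCommGroup V] [Module F V]

lemma smul_equiv_smul {W : Type*} [AddCommGroup W] [Module F W]
    {Q : QuadraticForm F V} {R : QuadraticForm F W}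
    (h : Equivalent Q R) (c : F) : Equivalent (c • Q) (c • R) := by
  obtain ⟨e⟩ := h
  exact ⟨{ e.toLinearEquiv with map_app' := fun v => congrArg (c • ·) (e.map_app v) }⟩

lemma prod_equiv_prod {W V' W' : Type*} [AddCommGroup W] [Module F W] [AddCommGroup V']
    [Module F V'] [AddCommGroup W'] [Module F W'] {Q : QuadraticForm F V} {R : QuadraticForm F W}
    {Q' : QuadraticForm F V'} {R' : QuadraticForm F W'}
    (h : Equivalent Q Q') (h' : Equivalent R R') : Equivalent (Q.prod R) (Q'.prod R') := by
  obtain ⟨e⟩ := h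
  obtain ⟨e'⟩ := h'
  exact ⟨e.prod e'⟩

lemma smul_prod_eq {W : Type*} [AddCommGroup W] [Module F W]
    (Q : QuadraticForm F V) (R : QuadraticForm F W) (c : F) :
    c • Q.prod R = (c • Q).prod (c • R) := by
  ext v
  simp [mul_add]

/-- The inductive step of "isotropic Pfister forms are hyperbolic": `H` plays the role of the
hyperbolic form of the same dimension as the round form `Q`. -/
lemma prod_smul_equiv_of_isotropic [CharP F 2] {Q H : QuadraticForm F V}
    (hround : ∀ w, Q w ≠ 0 → Equivalent (Q w • Q) Q)
    (hH : ∀ c : F, c ≠ 0 → Equivalent (c • H) H)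
    (hiso : (∃ w, w ≠ 0 ∧ Q w = 0) → Equivalent Q H)
    (hdbl : Equivalent (Q.prod Q) (H.prod H)) {c : F} (hc : c ≠ 0)
    (h : ∃ w, w ≠ 0 ∧ (Q.prod (c • Q)) w = 0) :
    Equivalent (Q.prod (c • Q)) (H.prod H) := by
  by_cases hQ : ∃ w, w ≠ 0 ∧ Q w = 0
  · have e := hiso hQ
    exact prod_equiv_prod e ((smul_equiv_smul e c).trans (hH c hc))
  · push Not at hQ
    obtain ⟨⟨u, v⟩, hne, h0⟩ := h
    simp only [prod_apply, smul_apply, smul_eq_mul] at h0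
    have huv : Q u = c * Q v := CharTwo.add_eq_zero.mp h0
    have hv : Q v ≠ 0 := by
      intro hv
      have hv0 : v = 0 := by
        by_contra hv'
        exact hQ v hv' hv
      have hu0 : u = 0 := by
        by_contra hu'
        exact hQ u hu' (by rw [huv, hv, mul_zero])
      exact hne (by rw [hu0, hv0]; rfl)
    have hu : Q u ≠ 0 := huv ▸ mul_ne_zero hc hv
    have e : Equivalent (c • Q) Q := by
      have e1 := smul_equiv_smul (hround v hv).symm c
      rw [smul_smul, ← huv] at e1
      exact e1.trans (hround u hu)
    exact (prod_equiv_prod (Equivalent.refl Q) e).trans hdbl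

end Scaling

/-! ### Values and scaling of the forms -/

section Forms

variable (F : Type*) [Field F]

lemma twoDimForm_apply (a b : F) (v : Fin 2 → F) :
    twoDimForm F a b v = a * (v 0 * v 0) + v 0 * v 1 + b * (v 1 * v 1) := by
  simp [twoDimForm]

lemma pfister2_apply (c b : F) (v : (Fin 2 → F) × (Fin 2 → F)) :
    pfister2 F c b v = twoDimForm F 1 b v.1 + c * twoDimForm F 1 b v.2 := by
  simp [pfister2]

lemma smul_hypPlane (c : F) (hc : c ≠ 0) : Equivalent (c • hypPlane F) (hypPlane F) := by
  refine ⟨{ toFun := fun v => ![c * v 0, v 1]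
            map_add' := ?_, map_smul' := ?_
            invFun := fun v => ![c⁻¹ * v 0, v 1]
            left_inv := ?_, right_inv := ?_, map_app' := ?_ }⟩
  · intro u v; ext i; fin_cases i <;> simp [mul_add]
  · intro r v; ext i; fin_cases i <;> simp [mul_left_comm]
  · intro v; ext i; fin_cases i <;> simp [hc]
  · intro v; ext i; fin_cases i <;> simp [hc]
  · intro v; simp [hypPlane, twoDimForm_apply, mul_assoc]

lemma smul_hypPlane_prod (c : F) (hc : c ≠ 0) :
    Equivalent (c • (hypPlane F).prod (hypPlane F)) ((hypPlane F).prod (hypPlane F)) := by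
  rw [smul_prod_eq]
  exact prod_equiv_prod (smul_hypPlane F c hc) (smul_hypPlane F c hc)

/-! ### Roundness of the norm forms -/

/-- Left multiplication by `w` on the quadratic algebra `F[ω]/(ω² - ω + b)`, whose norm form
is `[1,b]`, in the basis `1, ω`. -/
def quadMul (b : F) (w v : Fin 2 → F) : Fin 2 → F :=
  ![w 0 * v 0 - b * (w 1 * v 1), w 0 * v 1 + w 1 * v 0 + w 1 * v 1]

/-- The conjugation of the quadratic algebra `F[ω]/(ω² - ω + b)`, i.e. `ω ↦ 1 - ω`. -/
def quadConj (w : Fin 2 → F) : Fin 2 → F := ![w 0 + w 1, -w 1]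

lemma quadMul_apply_zero (b : F) (w v : Fin 2 → F) :
    quadMul F b w v 0 = w 0 * v 0 - b * (w 1 * v 1) := rfl

lemma quadMul_apply_one (b : F) (w v : Fin 2 → F) :
    quadMul F b w v 1 = w 0 * v 1 + w 1 * v 0 + w 1 * v 1 := rfl

lemma quadConj_apply_zero (w : Fin 2 → F) : quadConj F w 0 = w 0 + w 1 := rfl

lemma quadConj_apply_one (w : Fin 2 → F) : quadConj F w 1 = -w 1 := rfl

lemma twoDimForm_round (b : F) (w : Fin 2 → F) (hw : twoDimForm F 1 b w ≠ 0) :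
    Equivalent (twoDimForm F 1 b w • twoDimForm F 1 b) (twoDimForm F 1 b) := by
  obtain ⟨n, hn⟩ : ∃ n, n = twoDimForm F 1 b w := ⟨_, rfl⟩
  have hn0 : n ≠ 0 := hn ▸ hw
  rw [← hn]
  rw [twoDimForm_apply] at hn
  refine ⟨{ toFun := quadMul F b w
            map_add' := ?_, map_smul' := ?_
            invFun := fun v => n⁻¹ • quadMul F b (quadConj F w) v
            left_inv := ?_, right_inv := ?_, map_app' := ?_ }⟩
  · intro u v; ext i
    fin_cases i <;> simp [quadMul_apply_zero, quadMul_apply_one] <;> ring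
  · intro r v; ext i
    fin_cases i <;> simp [quadMul_apply_zero, quadMul_apply_one] <;> ring
  · intro v; ext i
    fin_cases i <;>
      simp [quadMul_apply_zero, quadMul_apply_one, quadConj_apply_zero, quadConj_apply_one] <;>
      field_simp <;> rw [hn] <;> ring
  · intro v; ext i
    fin_cases i <;>
      simp [quadMul_apply_zero, quadMul_apply_one, quadConj_apply_zero, quadConj_apply_one] <;>
      field_simp <;> rw [hn] <;> ring
  · intro v
    simp only [twoDimForm_apply, quadMul_apply_zero, quadMul_apply_one, smul_apply, smul_eq_mul, hn]
    ring

/-- Left multiplication by `w` on the quaternion algebra obtained by Cayley–Dickson doubling of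
`F[ω]/(ω² - ω + b)` with parameter `-c`, i.e. `(p, q)(r, s) = (p r - c s̄ q, s p + q r̄)`. -/
def quatMul (c b : F) (w v : (Fin 2 → F) × (Fin 2 → F)) : (Fin 2 → F) × (Fin 2 → F) :=
  (quadMul F b w.1 v.1 - c • quadMul F b (quadConj F v.2) w.2,
    quadMul F b v.2 w.1 + quadMul F b w.2 (quadConj F v.1))

lemma pfister2_round (c b : F) (w : (Fin 2 → F) × (Fin 2 → F)) (hw : pfister2 F c b w ≠ 0) :
    Equivalent (pfister2 F c b w • pfister2 F c b) (pfister2 F c b) := by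
  obtain ⟨n, hn⟩ : ∃ n, n = pfister2 F c b w := ⟨_, rfl⟩
  have hn0 : n ≠ 0 := hn ▸ hw
  rw [← hn]
  simp only [pfister2_apply, twoDimForm_apply] at hn
  -- the conjugate of `w = (p, q)` in the quaternion algebra is `(p̄, -q)`
  refine ⟨{ toFun := quatMul F c b w
            map_add' := ?_, map_smul' := ?_
            invFun := fun v => n⁻¹ • quatMul F c b (quadConj F w.1, -w.2) v
            left_inv := ?_, right_inv := ?_, map_app' := ?_ }⟩
  · intro u v
    ext i <;> fin_cases i <;> simp [quatMul, quadMul_apply_zero, quadMul_apply_one,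
      quadConj_apply_zero, quadConj_apply_one] <;> ring
  · intro r v
    ext i <;> fin_cases i <;> simp [quatMul, quadMul_apply_zero, quadMul_apply_one,
      quadConj_apply_zero, quadConj_apply_one] <;> ring
  · intro v
    ext i <;> fin_cases i <;> simp [quatMul, quadMul_apply_zero, quadMul_apply_one,
      quadConj_apply_zero, quadConj_apply_one] <;> field_simp <;> rw [hn] <;> ring
  · intro v
    ext i <;> fin_cases i <;> simp [quatMul, quadMul_apply_zero, quadMul_apply_one,
      quadConj_apply_zero, quadConj_apply_one] <;> field_simp <;> rw [hn] <;> ring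
  · intro v
    simp only [pfister2_apply, twoDimForm_apply, quatMul, quadMul_apply_zero, quadMul_apply_one,
      quadConj_apply_zero, quadConj_apply_one, smul_apply, smul_eq_mul, hn, Pi.add_apply,
      Pi.sub_apply, Pi.smul_apply]
    ring

/-! ### Hyperbolicity in characteristic 2 -/

variable [CharP F 2]

/-- If `[1,b]` is isotropic then `b = t² + t` for some `t`, and the form factors as
`(x + t y)(x + (t + 1) y)`. -/
lemma twoDimForm_equiv_hypPlane (b : F) (h : ∃ w, w ≠ 0 ∧ twoDimForm F 1 b w = 0) :
    Equivalent (twoDimForm F 1 b) (hypPlane F) := by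
  obtain ⟨w, hw, h0⟩ := h
  have h2 : (2 : F) = 0 := CharTwo.two_eq_zero
  rw [twoDimForm_apply] at h0
  have h1 : w 1 ≠ 0 := by
    intro h1
    simp [h1] at h0
    exact hw (by ext i; fin_cases i <;> simp [h0, h1])
  obtain ⟨t, ht⟩ : ∃ t, t = w 0 / w 1 := ⟨_, rfl⟩
  have hb : b = t * t + t := by
    have : t * t + t + b = 0 := by
      rw [ht]
      field_simp
      linear_combination h0
    linear_combination this - (t * t + t) * h2
  refine ⟨{ toFun := fun v => ![v 0 + t * v 1, v 0 + (t + 1) * v 1]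
            map_add' := ?_, map_smul' := ?_
            invFun := fun v => ![v 0 + t * (v 0 + v 1), v 0 + v 1]
            left_inv := ?_, right_inv := ?_, map_app' := ?_ }⟩
  · intro u v; ext i; fin_cases i <;> simp <;> ring
  · intro r v; ext i; fin_cases i <;> simp <;> ring
  · intro v; ext i; fin_cases i <;> simp <;> grind
  · intro v; ext i; fin_cases i <;> simp <;> grind
  · intro v; simp [hypPlane, twoDimForm_apply]; grind

/-- In characteristic 2, `B ⊥ B` is hyperbolic; here for `B = [1,b]`, with the diagonal as a
totally isotropic plane. -/
lemma twoDimForm_double (b : F) :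
    Equivalent ((twoDimForm F 1 b).prod (twoDimForm F 1 b))
      ((hypPlane F).prod (hypPlane F)) := by
  have h2 : (2 : F) = 0 := CharTwo.two_eq_zero
  -- with `s = v.1 0 + v.2 0` and `t = v.1 1 + v.2 1` the sum is
  -- `s (s + t + v.2 1) + t (v.2 0 + b t)`
  refine ⟨{ toFun := fun v => (![v.1 0 + v.2 0, v.1 0 + v.2 0 + v.1 1],
              ![v.1 1 + v.2 1, v.2 0 + b * (v.1 1 + v.2 1)])
            map_add' := ?_, map_smul' := ?_
            invFun := fun v => (![v.1 0 + v.2 1 + b * v.2 0, v.1 0 + v.1 1],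
              ![v.2 1 + b * v.2 0, v.1 0 + v.1 1 + v.2 0])
            left_inv := ?_, right_inv := ?_, map_app' := ?_ }⟩
  · intro u v; ext i <;> fin_cases i <;> simp <;> ring
  · intro r v; ext i <;> fin_cases i <;> simp <;> ring
  · intro v; ext i <;> fin_cases i <;> simp <;> grind
  · intro v; ext i <;> fin_cases i <;> simp <;> grind
  · intro v; simp [hypPlane, twoDimForm_apply]; grind

lemma pfister2_double (c b : F) (hc : c ≠ 0) :
    Equivalent ((pfister2 F c b).prod (pfister2 F c b))
      (((hypPlane F).prod (hypPlane F)).prod ((hypPlane F).prod (hypPlane F))) := by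
  have e : Equivalent ((pfister2 F c b).prod (pfister2 F c b))
      (((twoDimForm F 1 b).prod (twoDimForm F 1 b)).prod
        ((c • twoDimForm F 1 b).prod (c • twoDimForm F 1 b))) :=
    ⟨IsometryEquiv.prodProdProdComm _ _ _ _⟩
  refine e.trans (prod_equiv_prod (twoDimForm_double F b) ?_)
  rw [← smul_prod_eq]
  exact (smul_equiv_smul (twoDimForm_double F b) c).trans (smul_hypPlane_prod F c hc)

lemma pfister2_equiv_hyperbolic (c b : F) (hc : c ≠ 0)
    (h : ∃ w, w ≠ 0 ∧ pfister2 F c b w = 0) :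
    Equivalent (pfister2 F c b) ((hypPlane F).prod (hypPlane F)) :=
  prod_smul_equiv_of_isotropic (twoDimForm_round F b) (smul_hypPlane F)
    (twoDimForm_equiv_hypPlane F b) (twoDimForm_double F b) hc h

end Forms

theorem statement11 (F : Type*) [Field F] [CharP F 2]
    (hiso : ∀ α γ δ : F, γ ≠ 0 → δ ≠ 0 →
      ∃ v, v ≠ 0 ∧ pureAlbert2 F α γ δ v = 0) :
    ∀ c₁ c₂ b : F, c₁ ≠ 0 → c₂ ≠ 0 →
      QuadraticMap.Equivalent (pfister3 F c₁ c₂ b) (hyperbolic8 F) := by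
  intro c₁ c₂ b h₁ h₂
  refine prod_smul_equiv_of_isotropic (pfister2_round F c₂ b) (smul_hypPlane_prod F)
    (pfister2_equiv_hyperbolic F c₂ b h₂) (pfister2_double F c₂ b h₂) h₁ ?_
  obtain ⟨⟨x, y, z⟩, hne, h0⟩ := hiso b c₂ c₁ h₂ h₁
  -- `⟨1⟩` sits inside `[1,b]` as the first coordinate axis
  refine ⟨((![x, 0], y), (z, 0)), ?_, ?_⟩
  · intro h
    simp only [Prod.mk_eq_zero] at h
    obtain ⟨⟨hx, hy⟩, hz, -⟩ := h
    have hx0 : x = 0 := congrFun hx 0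
    exact hne (by rw [hx0, hy, hz]; rfl)
  · simp [pureAlbert2, twoDimForm_apply] at h0
    simp [pfister2_apply, twoDimForm_apply]
    linear_combination h0

end
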